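/- Let W be a Weyl candidate on 4-dimensional Minkowski space, T its Bel–Robinson tensor, and u : Fin 4 → ℝ a timelike future-directed vector (i.e. ∑_{a,b} η a b · u a · u b < 0 and u 0 > 0). Then ∑_{a,b,c,d} T a b c d · u a · u b · u c · u d = 0 if and only if W a b c d = 0 for all a, b, c, d; moreover ∑_{a,b,c,d} T a b c d · u a · u b · u c · u d ≥ 0, with strict inequality whenever W ≠ 0. -/

import Mathlib

/-!
The density `T(u,u,u,u)` is the sum of the squares of the electric and magnetic parts of `W` relative
to `u`.

Put `E_pm = W_{apdm} u^a u^d`. Contracting the definition of `T` gives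
`T(u,u,u,u) = 2 E_pm E^pm - (1/8) (u·u)² W²` (`density_eq`). A Weyl candidate is given by two symmetric
trace-free `3 × 3` matrices, its electric and magnetic matrices in the rest frame (`eq_weylOf`);
exchanging them, up to a sign, gives the dual tensor, whose electric part relative to `u` is the
magnetic part `B_pm` of `W`. From `W² = 8 (|E|² - |B|²)` (`weylSq_weylOf`) and the invariance
`E_pm E^pm - B_pm B^pm = (u·u)² (|E|² - |B|²)` (`minkSq_sub`) one gets
`T(u,u,u,u) = E_pm E^pm + B_pm B^pm`.

Both tensors are symmetric and annihilated by the timelike vector `u`, so their Minkowski squares are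
nonnegative and vanish only when their spatial blocks do (`posdef_aux`, `minkSq_bound`). These blocks
are the real and imaginary parts of `L (E + i B) Lᵀ` for a complex boost matrix `L` with determinant
`u⁰ (-u·u) ≠ 0`, so their vanishing forces `E = B = 0` (`parts_eq_zero`), that is `W = 0`.
-/

/-- The Minkowski metric `η` on `Fin 4`: `η 0 0 = -1`, `η a a = 1` for `a ≠ 0`,
and `η a b = 0` for `a ≠ b`. -/
def eta (a b : Fin 4) : ℝ := if a = b then (if a = 0 then -1 else 1) else 0

/-- A Weyl candidate on 4-dimensional Minkowski space. -/
def IsWeylCandidate (W : Fin 4 → Fin 4 → Fin 4 → Fin 4 → ℝ) : Prop :=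
  (∀ a b c d, W a b c d = - W b a c d) ∧
  (∀ a b c d, W a b c d = - W a b d c) ∧
  (∀ a b c d, W a b c d = W c d a b) ∧
  (∀ a b c d, W a b c d + W a c d b + W a d b c = 0) ∧
  (∀ b c, ∑ p : Fin 4, ∑ q : Fin 4, eta p q * W p b q c = 0)

/-- The Bel–Robinson tensor of a Weyl candidate `W`. -/
noncomputable def belRobinson (W : Fin 4 → Fin 4 → Fin 4 → Fin 4 → ℝ) (a b c d : Fin 4) : ℝ :=
  (∑ p : Fin 4, ∑ q : Fin 4, ∑ m : Fin 4, ∑ n : Fin 4,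
      eta p q * eta m n * (W a p d m * W b q c n + W a m c p * W b n d q))
  - (1/8) * eta a b * eta c d *
      (∑ m : Fin 4, ∑ n : Fin 4, ∑ p : Fin 4, ∑ l : Fin 4, W m n p l *
        (∑ m' : Fin 4, ∑ n' : Fin 4, ∑ p' : Fin 4, ∑ l' : Fin 4,
          eta m m' * eta n n' * eta p p' * eta l l' * W m' n' p' l'))

/-! ### The density in terms of the electric part -/

/-- The tensor `E_pm = W_{apdm} u^a u^d`, the electric part of `W` relative to `u`
(not normalized by the length of `u`). -/
def electricPart (W : Fin 4 → Fin 4 → Fin 4 → Fin 4 → ℝ) (u : Fin 4 → ℝ) (p m : Fin 4) : ℝ :=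
  ∑ a : Fin 4, ∑ d : Fin 4, W a p d m * u a * u d

/-- The scalar `W_{mnpl} W^{mnpl}`, written with the diagonal entries of `eta`. -/
def weylSq (W : Fin 4 → Fin 4 → Fin 4 → Fin 4 → ℝ) : ℝ :=
  ∑ m : Fin 4, ∑ n : Fin 4, ∑ p : Fin 4, ∑ l : Fin 4,
    eta m m * eta n n * eta p p * eta l l * W m n p l ^ 2

lemma sum_eta_mul (a : Fin 4) (f : Fin 4 → ℝ) : ∑ b : Fin 4, eta a b * f b = eta a a * f a := by
  rw [Finset.sum_eq_single a]
  · intro b _ hb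
    simp [eta, hb.symm]
  · simp

lemma weylSq_eq (W : Fin 4 → Fin 4 → Fin 4 → Fin 4 → ℝ) :
    (∑ m : Fin 4, ∑ n : Fin 4, ∑ p : Fin 4, ∑ l : Fin 4, W m n p l *
        (∑ m' : Fin 4, ∑ n' : Fin 4, ∑ p' : Fin 4, ∑ l' : Fin 4,
          eta m m' * eta n n' * eta p p' * eta l l' * W m' n' p' l')) = weylSq W := by
  refine Finset.sum_congr rfl fun m _ => Finset.sum_congr rfl fun n _ =>
    Finset.sum_congr rfl fun p _ => Finset.sum_congr rfl fun l _ => ?_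
  simp only [mul_assoc, ← Finset.mul_sum, sum_eta_mul]
  ring

lemma belRobinson_eq (W : Fin 4 → Fin 4 → Fin 4 → Fin 4 → ℝ) (a b c d : Fin 4) :
    belRobinson W a b c d =
      (∑ p : Fin 4, ∑ m : Fin 4, eta p p * eta m m *
        (W a p d m * W b p c m + W a m c p * W b m d p))
      - (1/8) * eta a b * eta c d * weylSq W := by
  unfold belRobinson
  rw [weylSq_eq]
  congr 1
  refine Finset.sum_congr rfl fun p _ => ?_
  simp only [mul_assoc, ← Finset.mul_sum, sum_eta_mul]

lemma sum_four_quad (f g : Fin 4 → Fin 4 → ℝ) :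
    ∑ a : Fin 4, ∑ b : Fin 4, ∑ c : Fin 4, ∑ d : Fin 4, f a b * g c d =
      (∑ a : Fin 4, ∑ b : Fin 4, f a b) * ∑ c : Fin 4, ∑ d : Fin 4, g c d := by
  simp only [Finset.sum_mul]
  simp only [Finset.mul_sum]

/-- Both quadratic terms of the Bel–Robinson tensor contract with `u` to `E_pm E^pm`. -/
lemma density_eq (W : Fin 4 → Fin 4 → Fin 4 → Fin 4 → ℝ) (u : Fin 4 → ℝ) :
    ∑ a : Fin 4, ∑ b : Fin 4, ∑ c : Fin 4, ∑ d : Fin 4,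
        belRobinson W a b c d * u a * u b * u c * u d =
      2 * (∑ p : Fin 4, ∑ m : Fin 4, eta p p * eta m m * electricPart W u p m ^ 2)
      - (1/8) * (∑ a : Fin 4, ∑ b : Fin 4, eta a b * u a * u b) ^ 2 * weylSq W := by
  have h1 : ∀ p m, ∑ a : Fin 4, ∑ b : Fin 4, ∑ c : Fin 4, ∑ d : Fin 4,
      W a p d m * W b p c m * (u a * u b * u c * u d) = electricPart W u p m ^ 2 := by
    intro p m
    rw [sq, electricPart, ← sum_four_quad]
    refine Finset.sum_congr rfl fun a _ => ?_
    rw [Finset.sum_comm_cycle]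
    refine Finset.sum_congr rfl fun b _ => Finset.sum_congr rfl fun c _ =>
      Finset.sum_congr rfl fun d _ => ?_
    ring
  have h2 : ∀ p m, ∑ a : Fin 4, ∑ b : Fin 4, ∑ c : Fin 4, ∑ d : Fin 4,
      W a p c m * W b p d m * (u a * u b * u c * u d) = electricPart W u p m ^ 2 := by
    intro p m
    rw [sq, electricPart, ← sum_four_quad]
    refine Finset.sum_congr rfl fun a _ => ?_
    rw [Finset.sum_comm]
    refine Finset.sum_congr rfl fun b _ => Finset.sum_congr rfl fun c _ =>
      Finset.sum_congr rfl fun d _ => ?_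
    ring
  have h3 : ∑ a : Fin 4, ∑ b : Fin 4, ∑ c : Fin 4, ∑ d : Fin 4,
      eta a b * eta c d * (u a * u b * u c * u d) =
      (∑ a : Fin 4, ∑ b : Fin 4, eta a b * u a * u b) ^ 2 := by
    rw [sq, ← sum_four_quad]
    refine Finset.sum_congr rfl fun a _ => Finset.sum_congr rfl fun b _ =>
      Finset.sum_congr rfl fun c _ => Finset.sum_congr rfl fun d _ => ?_
    ring
  have h4 : ∀ F : Fin 4 → Fin 4 → Fin 4 → Fin 4 → Fin 4 → Fin 4 → ℝ,
      ∑ a : Fin 4, ∑ b : Fin 4, ∑ c : Fin 4, ∑ d : Fin 4, ∑ p : Fin 4, ∑ m : Fin 4, F a b c d p m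
      = ∑ p : Fin 4, ∑ m : Fin 4, ∑ a : Fin 4, ∑ b : Fin 4, ∑ c : Fin 4, ∑ d : Fin 4,
        F a b c d p m := by
    intro F
    simp only [← Fintype.sum_prod_type']
    exact Fintype.sum_equiv ⟨fun x => (x.2.2.2.2.1, x.2.2.2.2.2, x.1, x.2.1, x.2.2.1, x.2.2.2.1),
      fun x => (x.2.2.1, x.2.2.2.1, x.2.2.2.2.1, x.2.2.2.2.2, x.1, x.2.1), fun _ => rfl,
      fun _ => rfl⟩ _ _ (fun _ => rfl)
  have h5 : ∀ a b c d, belRobinson W a b c d * u a * u b * u c * u d =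
      (∑ p : Fin 4, ∑ m : Fin 4, (eta p p * eta m m *
        (W a p d m * W b p c m * (u a * u b * u c * u d)) + eta p p * eta m m *
        (W a m c p * W b m d p * (u a * u b * u c * u d))))
      - (1/8) * weylSq W * (eta a b * eta c d * (u a * u b * u c * u d)) := by
    intro a b c d
    rw [belRobinson_eq, mul_assoc, mul_assoc, mul_assoc, sub_mul]
    congr 1
    · simp only [Finset.sum_mul]
      refine Finset.sum_congr rfl fun p _ => Finset.sum_congr rfl fun m _ => ?_
      ring
    · ring
  simp only [h5, Finset.sum_sub_distrib]
  rw [h4]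
  simp only [Finset.sum_add_distrib, ← Finset.mul_sum, h1, h2, h3]
  rw [Finset.sum_comm (f := fun p m => eta p p * eta m m * electricPart W u m p ^ 2)]
  simp only [mul_comm (eta _ _) (eta _ _)]
  ring
/-! ### Positivity on the orthogonal complement of a timelike vector -/

/-- Quantitative positive definiteness of the Minkowski square `S_pm S^pm` on symmetric tensors `S`
annihilated by the timelike vector `(t, v)`, `v = (x, y, z)`. Eliminating the time components gives
`t⁴ S_pm S^pm = tr (X P X P)` with `X` the spatial block and `P = t² - v vᵀ = c + M Mᵀ`, where
`c = t² - |v|²` and `M` is the matrix of the cross product with `v`; hence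
`tr (X P X P) = c² |X|² + 2 c |X M|² + |Mᵀ X M|²`. -/
lemma posdef_aux {t x y z : ℝ} (hc : 0 < t ^ 2 - x ^ 2 - y ^ 2 - z ^ 2)
    {s00 s01 s02 s03 s11 s12 s13 s22 s23 s33 : ℝ}
    (h0 : t * s00 = -(x * s01 + y * s02 + z * s03))
    (h1 : t * s01 = -(x * s11 + y * s12 + z * s13))
    (h2 : t * s02 = -(x * s12 + y * s22 + z * s23))
    (h3 : t * s03 = -(x * s13 + y * s23 + z * s33)) :
    (t ^ 2 - x ^ 2 - y ^ 2 - z ^ 2) ^ 2 * (s11 ^ 2 + s22 ^ 2 + s33 ^ 2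
      + 2 * (s12 ^ 2 + s13 ^ 2 + s23 ^ 2)) ≤
    t ^ 4 * (s00 ^ 2 - 2 * (s01 ^ 2 + s02 ^ 2 + s03 ^ 2) + s11 ^ 2 + s22 ^ 2 + s33 ^ 2
      + 2 * (s12 ^ 2 + s13 ^ 2 + s23 ^ 2)) := by
  set c := t ^ 2 - x ^ 2 - y ^ 2 - z ^ 2 with hcdef
  have h00 : t ^ 2 * s00 = x * (x * s11 + y * s12 + z * s13) + y * (x * s12 + y * s22 + z * s23)
      + z * (x * s13 + y * s23 + z * s33) := by
    linear_combination t * h0 - x * h1 - y * h2 - z * h3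
  have e : t ^ 4 * (s00 ^ 2 - 2 * (s01 ^ 2 + s02 ^ 2 + s03 ^ 2) + s11 ^ 2 + s22 ^ 2 + s33 ^ 2
      + 2 * (s12 ^ 2 + s13 ^ 2 + s23 ^ 2)) =
      (t ^ 2 * s00) ^ 2 - 2 * t ^ 2 * ((t * s01) ^ 2 + (t * s02) ^ 2 + (t * s03) ^ 2)
      + t ^ 4 * (s11 ^ 2 + s22 ^ 2 + s33 ^ 2 + 2 * (s12 ^ 2 + s13 ^ 2 + s23 ^ 2)) := by ring
  rw [e, h00, h1, h2, h3]
  -- the entries of `X M`: the rows of `X` crossed with `v`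
  set a11 := s12 * z - s13 * y with ha11
  set a12 := s13 * x - s11 * z with ha12
  set a13 := s11 * y - s12 * x with ha13
  set a21 := s22 * z - s23 * y with ha21
  set a22 := s23 * x - s12 * z with ha22
  set a23 := s12 * y - s22 * x with ha23
  set a31 := s23 * z - s33 * y with ha31
  set a32 := s33 * x - s13 * z with ha32
  set a33 := s13 * y - s23 * x with ha33
  have key : 0 ≤ 2 * c * (a11 ^ 2 + a12 ^ 2 + a13 ^ 2 + a21 ^ 2 + a22 ^ 2 + a23 ^ 2
        + a31 ^ 2 + a32 ^ 2 + a33 ^ 2)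
      + ((a21 * z - a31 * y) ^ 2 + (a31 * x - a11 * z) ^ 2 + (a11 * y - a21 * x) ^ 2
        + (a22 * z - a32 * y) ^ 2 + (a32 * x - a12 * z) ^ 2 + (a12 * y - a22 * x) ^ 2
        + (a23 * z - a33 * y) ^ 2 + (a33 * x - a13 * z) ^ 2 + (a13 * y - a23 * x) ^ 2) := by
    positivity
  refine le_of_sub_nonneg (key.trans_eq ?_)
  rw [ha11, ha12, ha13, ha21, ha22, ha23, ha31, ha32, ha33, hcdef]
  ring


/-! ### Weyl candidates from their electric and magnetic matrices -/

/-- The `(a, b)` component of the basis bivector `e_i ∧ e_j`. -/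
def bivec (i j a b : Fin 4) : ℝ :=
  (if a = i ∧ b = j then 1 else 0) - (if a = j ∧ b = i then 1 else 0)

/-- Coefficients of the antisymmetric index pair `(a, b)` along the time-space bivectors. -/
def elecVec (a b : Fin 4) : Fin 3 → ℝ := ![bivec 0 1 a b, bivec 0 2 a b, bivec 0 3 a b]

/-- Coefficients of the antisymmetric index pair `(a, b)` along the space-space bivectors, in the
cyclic order `23, 31, 12`. -/
def magVec (a b : Fin 4) : Fin 3 → ℝ := ![bivec 2 3 a b, bivec 3 1 a b, bivec 1 2 a b]

/-- The tensor with electric matrix `E` and magnetic matrix `B` with respect to the rest frame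
`e_0`: as a form on bivectors its blocks are `E`, `B`, `B`, `-E`. -/
def weylOf (E B : Matrix (Fin 3) (Fin 3) ℝ) (a b c d : Fin 4) : ℝ :=
  ∑ k, ∑ l, (elecVec a b k * E k l * elecVec c d l + elecVec a b k * B k l * magVec c d l
    + magVec a b k * B k l * elecVec c d l - magVec a b k * E k l * magVec c d l)

/-- The general symmetric trace-free `3 × 3` matrix. -/
def symTF (e11 e12 e13 e22 e23 : ℝ) : Matrix (Fin 3) (Fin 3) ℝ :=
  !![e11, e12, e13; e12, e22, e23; e13, e23, -e11 - e22]

lemma antisym_ext {f g : Fin 4 → Fin 4 → ℝ} (hf : ∀ a b, f a b = -f b a)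
    (hg : ∀ a b, g a b = -g b a) (h01 : f 0 1 = g 0 1) (h02 : f 0 2 = g 0 2)
    (h03 : f 0 3 = g 0 3) (h12 : f 1 2 = g 1 2) (h13 : f 1 3 = g 1 3) (h23 : f 2 3 = g 2 3)
    (a b : Fin 4) : f a b = g a b := by
  have hlt : ∀ a b : Fin 4, a < b → f a b = g a b := by
    intro a b hab
    fin_cases a <;> fin_cases b <;> first | assumption | exact absurd hab (by decide)
  rcases lt_trichotomy a b with h | rfl | h
  · exact hlt a b h
  · linarith [hf a a, hg a a]
  · rw [hf, hg, hlt b a h]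

lemma bivec_swap (i j a b : Fin 4) : bivec i j a b = -bivec i j b a := by
  simp [bivec, and_comm]

lemma weylOf_swap_left (E B : Matrix (Fin 3) (Fin 3) ℝ) (a b c d : Fin 4) :
    weylOf E B a b c d = -weylOf E B b a c d := by
  simp only [weylOf, Fin.sum_univ_three, elecVec, magVec, bivec_swap _ _ a b]
  simp
  ring

lemma weylOf_swap_right (E B : Matrix (Fin 3) (Fin 3) ℝ) (a b c d : Fin 4) :
    weylOf E B a b c d = -weylOf E B a b d c := by
  simp only [weylOf, Fin.sum_univ_three, elecVec, magVec, bivec_swap _ _ c d]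
  simp
  ring

/-- Every Weyl candidate is determined by its ten independent components: the trace condition forces
the block form of `weylOf`, and together with the cyclic identity makes `E` and `B` symmetric and
trace-free. -/
lemma eq_weylOf (W : Fin 4 → Fin 4 → Fin 4 → Fin 4 → ℝ) (hW : IsWeylCandidate W) :
    W = weylOf (symTF (W 0 1 0 1) (W 0 1 0 2) (W 0 1 0 3) (W 0 2 0 2) (W 0 2 0 3))
      (symTF (W 0 1 2 3) (-W 0 1 1 3) (W 0 1 1 2) (-W 0 2 1 3) (W 0 2 1 2)) := by
  obtain ⟨h1, h2, h3, h4, h5⟩ := hW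
  have d1 : ∀ a c d, W a a c d = 0 := fun a c d => by linarith [h1 a a c d]
  have d2 : ∀ a b c, W a b c c = 0 := fun a b c => by linarith [h2 a b c c]
  have tr : ∀ b c, -W 0 b 0 c + W 1 b 1 c + W 2 b 2 c + W 3 b 3 c = 0 := by
    intro b c
    have := h5 b c
    simp [Fin.sum_univ_four, eta] at this
    linarith
  have r10 : ∀ c d, W 1 0 c d = - W 0 1 c d := fun c d => h1 _ _ _ _
  have r20 : ∀ c d, W 2 0 c d = - W 0 2 c d := fun c d => h1 _ _ _ _
  have r30 : ∀ c d, W 3 0 c d = - W 0 3 c d := fun c d => h1 _ _ _ _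
  have r21 : ∀ c d, W 2 1 c d = - W 1 2 c d := fun c d => h1 _ _ _ _
  have r31 : ∀ c d, W 3 1 c d = - W 1 3 c d := fun c d => h1 _ _ _ _
  have r32 : ∀ c d, W 3 2 c d = - W 2 3 c d := fun c d => h1 _ _ _ _
  have s10 : ∀ a b, W a b 1 0 = - W a b 0 1 := fun c d => h2 _ _ _ _
  have s20 : ∀ a b, W a b 2 0 = - W a b 0 2 := fun c d => h2 _ _ _ _
  have s30 : ∀ a b, W a b 3 0 = - W a b 0 3 := fun c d => h2 _ _ _ _
  have s21 : ∀ a b, W a b 2 1 = - W a b 1 2 := fun c d => h2 _ _ _ _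
  have s31 : ∀ a b, W a b 3 1 = - W a b 1 3 := fun c d => h2 _ _ _ _
  have s32 : ∀ a b, W a b 3 2 = - W a b 2 3 := fun c d => h2 _ _ _ _
  have t00 := tr 0 0
  have t01 := tr 0 1
  have t02 := tr 0 2
  have t03 := tr 0 3
  have t11 := tr 1 1
  have t12 := tr 1 2
  have t13 := tr 1 3
  have t22 := tr 2 2
  have t23 := tr 2 3
  have t33 := tr 3 3
  have c0 := h4 0 1 2 3
  have p1 := h3 0 2 0 1
  have p2 := h3 0 3 0 1
  have p3 := h3 0 3 0 2
  have p4 := h3 1 3 1 2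
  have p5 := h3 2 3 1 2
  have p6 := h3 2 3 1 3
  have q1 := fun i => h3 1 2 0 i
  have q2 := fun i => h3 1 3 0 i
  have q3 := fun i => h3 2 3 0 i
  simp only [d1, d2, r10, r20, r30, r21, r31, r32, s10, s20, s30, s21, s31, s32]
    at t00 t01 t02 t03 t11 t12 t13 t22 t23 t33 c0
  funext a b c d
  refine antisym_ext (fun a b => h1 a b c d) (fun a b => weylOf_swap_left _ _ a b c d)
    ?_ ?_ ?_ ?_ ?_ ?_ a b <;>
  refine antisym_ext (fun c d => h2 _ _ c d) (fun c d => weylOf_swap_right _ _ _ _ c d)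
    ?_ ?_ ?_ ?_ ?_ ?_ c d <;>
  simp [weylOf, symTF, elecVec, magVec, bivec, Fin.sum_univ_three, q1, q2, q3] <;>
  linarith

/-! ### The electric part and its dual -/

/-- The time-space coefficients of the bivectors `u ∧ e_p`. -/
noncomputable def elecContr (u : Fin 4 → ℝ) (p : Fin 4) (k : Fin 3) : ℝ := ∑ a, u a * elecVec a p k

/-- The space-space coefficients of the bivectors `u ∧ e_p`. -/
noncomputable def magContr (u : Fin 4 → ℝ) (p : Fin 4) (k : Fin 3) : ℝ := ∑ a, u a * magVec a p k

lemma electricPart_weylOf (E B : Matrix (Fin 3) (Fin 3) ℝ) (u : Fin 4 → ℝ) (p m : Fin 4) :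
    electricPart (weylOf E B) u p m =
      ∑ k, ∑ l, (elecContr u p k * E k l * elecContr u m l
        + elecContr u p k * B k l * magContr u m l + magContr u p k * B k l * elecContr u m l
        - magContr u p k * E k l * magContr u m l) := by
  have swap : ∀ F : Fin 4 → Fin 4 → Fin 3 → Fin 3 → ℝ,
      ∑ a, ∑ d, ∑ k, ∑ l, F a d k l = ∑ k, ∑ l, ∑ a, ∑ d, F a d k l := by
    intro F
    simp only [← Fintype.sum_prod_type']
    exact Fintype.sum_equiv ⟨fun x => (x.2.2.1, x.2.2.2, x.1, x.2.1),
      fun x => (x.2.2.1, x.2.2.2, x.1, x.2.1), fun _ => rfl, fun _ => rfl⟩ _ _ (fun _ => rfl)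
  simp only [electricPart, weylOf, Finset.sum_mul]
  rw [swap]
  refine Finset.sum_congr rfl fun k _ => Finset.sum_congr rfl fun l _ => ?_
  simp only [elecContr, magContr, Fin.sum_univ_four]
  ring

lemma elecContr_zero (u : Fin 4 → ℝ) : elecContr u 0 = ![-u 1, -u 2, -u 3] := by
  ext k; fin_cases k <;> simp [elecContr, elecVec, bivec]

lemma elecContr_one (u : Fin 4 → ℝ) : elecContr u 1 = ![u 0, 0, 0] := by
  ext k; fin_cases k <;> simp [elecContr, elecVec, bivec]

lemma elecContr_two (u : Fin 4 → ℝ) : elecContr u 2 = ![0, u 0, 0] := by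
  ext k; fin_cases k <;> simp [elecContr, elecVec, bivec]

lemma elecContr_three (u : Fin 4 → ℝ) : elecContr u 3 = ![0, 0, u 0] := by
  ext k; fin_cases k <;> simp [elecContr, elecVec, bivec]

lemma magContr_zero (u : Fin 4 → ℝ) : magContr u 0 = ![0, 0, 0] := by
  ext k; fin_cases k <;> simp [magContr, magVec, bivec]

lemma magContr_one (u : Fin 4 → ℝ) : magContr u 1 = ![0, u 3, -u 2] := by
  ext k; fin_cases k <;> simp [magContr, magVec, bivec]

lemma magContr_two (u : Fin 4 → ℝ) : magContr u 2 = ![-u 3, 0, u 1] := by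
  ext k; fin_cases k <;> simp [magContr, magVec, bivec]

lemma magContr_three (u : Fin 4 → ℝ) : magContr u 3 = ![u 2, -u 1, 0] := by
  ext k; fin_cases k <;> simp [magContr, magVec, bivec]

lemma electricPart_swap (e11 e12 e13 e22 e23 b11 b12 b13 b22 b23 : ℝ) (u : Fin 4 → ℝ)
    (p m : Fin 4) :
    electricPart (weylOf (symTF e11 e12 e13 e22 e23) (symTF b11 b12 b13 b22 b23)) u p m =
    electricPart (weylOf (symTF e11 e12 e13 e22 e23) (symTF b11 b12 b13 b22 b23)) u m p := by
  simp [electricPart_weylOf, Fin.sum_univ_three, symTF]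
  ring

lemma electricPart_orthogonal (E B : Matrix (Fin 3) (Fin 3) ℝ) (u : Fin 4 → ℝ) (m : Fin 4) :
    ∑ p, u p * electricPart (weylOf E B) u p m = 0 := by
  simp [electricPart_weylOf, Fin.sum_univ_three, Fin.sum_univ_four, elecContr_zero, elecContr_one,
    elecContr_two, elecContr_three, magContr_zero, magContr_one, magContr_two, magContr_three]
  ring

/-- The Minkowski square `S_pm S^pm` of a two-index tensor. -/
noncomputable def minkSq (S : Fin 4 → Fin 4 → ℝ) : ℝ := ∑ p, ∑ m, eta p p * eta m m * S p m ^ 2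

lemma weylSq_weylOf (e11 e12 e13 e22 e23 b11 b12 b13 b22 b23 : ℝ) :
    weylSq (weylOf (symTF e11 e12 e13 e22 e23) (symTF b11 b12 b13 b22 b23)) =
      8 * ((∑ i, ∑ j, symTF e11 e12 e13 e22 e23 i j ^ 2)
        - ∑ i, ∑ j, symTF b11 b12 b13 b22 b23 i j ^ 2) := by
  simp [weylSq, weylOf, eta, Fin.sum_univ_three, Fin.sum_univ_four, elecVec, magVec, bivec, symTF]
  ring

/-- Replacing `(E, B)` by `(B, -E)` dualizes `W`, so its electric part is the magnetic part of `W`.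
The lemma states that `E_pm E^pm - B_pm B^pm` depends on `u` only through its length. -/
lemma minkSq_sub (e11 e12 e13 e22 e23 b11 b12 b13 b22 b23 : ℝ) (u : Fin 4 → ℝ) :
    minkSq (electricPart (weylOf (symTF e11 e12 e13 e22 e23) (symTF b11 b12 b13 b22 b23)) u)
    - minkSq (electricPart (weylOf (symTF b11 b12 b13 b22 b23)
        (symTF (-e11) (-e12) (-e13) (-e22) (-e23))) u) =
      (∑ a : Fin 4, ∑ b : Fin 4, eta a b * u a * u b) ^ 2 *
      ((∑ i, ∑ j, symTF e11 e12 e13 e22 e23 i j ^ 2)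
        - ∑ i, ∑ j, symTF b11 b12 b13 b22 b23 i j ^ 2) := by
  simp [minkSq, electricPart_weylOf, Fin.sum_univ_three, Fin.sum_univ_four, elecContr_zero,
    elecContr_one, elecContr_two, elecContr_three, magContr_zero, magContr_one, magContr_two,
    magContr_three, symTF, eta]
  ring

lemma minkSq_bound (e11 e12 e13 e22 e23 b11 b12 b13 b22 b23 : ℝ) (u : Fin 4 → ℝ)
    (hu : (∑ a : Fin 4, ∑ b : Fin 4, eta a b * u a * u b) < 0 ∧ 0 < u 0)
    (S : Fin 4 → Fin 4 → ℝ) (hS : S =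
      electricPart (weylOf (symTF e11 e12 e13 e22 e23) (symTF b11 b12 b13 b22 b23)) u) :
    0 ≤ minkSq S ∧ (minkSq S = 0 → ∀ i j : Fin 3, S i.succ j.succ = 0) := by
  obtain ⟨hc, ht⟩ := hu
  have hc' : 0 < u 0 ^ 2 - u 1 ^ 2 - u 2 ^ 2 - u 3 ^ 2 := by
    simp [eta, Fin.sum_univ_four] at hc
    linarith
  have sw : ∀ p m, S p m = S m p := fun p m => by rw [hS]; exact electricPart_swap ..
  have orth : ∀ m, u 0 * S 0 m = -(u 1 * S 1 m + u 2 * S 2 m + u 3 * S 3 m) := fun m => by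
    have := electricPart_orthogonal (symTF e11 e12 e13 e22 e23) (symTF b11 b12 b13 b22 b23) u m
    rw [← hS, Fin.sum_univ_four] at this
    linarith
  have key := posdef_aux hc' (s00 := S 0 0) (by rw [orth 0, sw 1 0, sw 2 0, sw 3 0])
    (by rw [orth 1, sw 2 1, sw 3 1]) (by rw [orth 2, sw 3 2]) (orth 3)
  have hm : minkSq S = S 0 0 ^ 2 - 2 * (S 0 1 ^ 2 + S 0 2 ^ 2 + S 0 3 ^ 2) + S 1 1 ^ 2
      + S 2 2 ^ 2 + S 3 3 ^ 2 + 2 * (S 1 2 ^ 2 + S 1 3 ^ 2 + S 2 3 ^ 2) := by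
    simp [minkSq, eta, Fin.sum_univ_four, sw 1 0, sw 2 0, sw 3 0, sw 2 1, sw 3 1, sw 3 2]
    ring
  rw [← hm] at key
  constructor
  · have h4 : 0 ≤ u 0 ^ 4 * minkSq S := le_trans (by positivity) key
    exact nonneg_of_mul_nonneg_right h4 (by positivity)
  · intro h0
    rw [h0, mul_zero] at key
    have hs := nonpos_of_mul_nonpos_right key (by positivity)
    have z : ∀ r : ℝ, r ^ 2 ≤ 0 → r = 0 := fun r hr => by
      rwa [sq_nonpos_iff] at hr
    have := sq_nonneg (S 1 1)
    have := sq_nonneg (S 1 2)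
    have := sq_nonneg (S 1 3)
    have := sq_nonneg (S 2 2)
    have := sq_nonneg (S 2 3)
    have := sq_nonneg (S 3 3)
    have h11 : S 1 1 = 0 := z _ (by linarith)
    have h12 : S 1 2 = 0 := z _ (by linarith)
    have h13 : S 1 3 = 0 := z _ (by linarith)
    have h22 : S 2 2 = 0 := z _ (by linarith)
    have h23 : S 2 3 = 0 := z _ (by linarith)
    have h33 : S 3 3 = 0 := z _ (by linarith)
    intro i j
    fin_cases i <;> fin_cases j <;> simp [h11, h12, h13, h22, h23, h33, sw 2 1, sw 3 1, sw 3 2]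

/-- The complexified boost: row `i` is the self-dual part (electric minus `i` times magnetic
coefficients) of the bivector `u ∧ e_i`. -/
noncomputable def boost (u : Fin 4 → ℝ) : Matrix (Fin 3) (Fin 3) ℂ :=
  Matrix.of fun i k => ⟨elecContr u i.succ k, -magContr u i.succ k⟩

/-- The complex matrix `Q = E + i B`. -/
noncomputable def cplx (E B : Matrix (Fin 3) (Fin 3) ℝ) : Matrix (Fin 3) (Fin 3) ℂ :=
  Matrix.of fun i j => ⟨E i j, B i j⟩

/-- The spatial blocks of the electric and magnetic parts relative to `u` are the real and imaginary
parts of `L Q Lᵀ`, with `L` the boost matrix. -/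
lemma boost_mul (E B : Matrix (Fin 3) (Fin 3) ℝ) (u : Fin 4 → ℝ) :
    boost u * cplx E B * (boost u).transpose = Matrix.of fun i j : Fin 3 =>
      (⟨electricPart (weylOf E B) u i.succ j.succ,
        electricPart (weylOf B (-E)) u i.succ j.succ⟩ : ℂ) := by
  ext i j
  rw [Complex.ext_iff]
  simp [electricPart_weylOf, boost, cplx, Matrix.mul_apply, Fin.sum_univ_three]
  constructor <;> ring

lemma boost_det (u : Fin 4 → ℝ) :
    (boost u).det = ((u 0 * (u 0 ^ 2 - u 1 ^ 2 - u 2 ^ 2 - u 3 ^ 2) : ℝ) : ℂ) := by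
  rw [Matrix.det_fin_three, Complex.ext_iff]
  simp [sq, boost, elecContr_one, elecContr_two, elecContr_three, magContr_one, magContr_two,
    magContr_three]
  constructor <;> ring

/-- Since `L` is invertible for timelike `u`, the spatial blocks relative to `u` determine `E` and
`B`. -/
lemma parts_eq_zero (E B : Matrix (Fin 3) (Fin 3) ℝ) (u : Fin 4 → ℝ)
    (hu : (∑ a : Fin 4, ∑ b : Fin 4, eta a b * u a * u b) < 0 ∧ 0 < u 0)
    (h1 : ∀ i j : Fin 3, electricPart (weylOf E B) u i.succ j.succ = 0)
    (h2 : ∀ i j : Fin 3, electricPart (weylOf B (-E)) u i.succ j.succ = 0) : E = 0 ∧ B = 0 := by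
  obtain ⟨hc, ht⟩ := hu
  have hc' : 0 < u 0 ^ 2 - u 1 ^ 2 - u 2 ^ 2 - u 3 ^ 2 := by
    simp [eta, Fin.sum_univ_four] at hc
    linarith
  have hdet : IsUnit (boost u).det := by
    rw [boost_det, isUnit_iff_ne_zero, Complex.ofReal_ne_zero]
    positivity
  have hU : IsUnit (boost u) := (Matrix.isUnit_iff_isUnit_det _).2 hdet
  have hUt : IsUnit (boost u).transpose := by
    rw [Matrix.isUnit_iff_isUnit_det, Matrix.det_transpose]
    exact hdet
  have h0 : boost u * cplx E B * (boost u).transpose = 0 := by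
    rw [boost_mul]
    ext i j
    simp only [Matrix.of_apply, h1, h2]
    rfl
  have hQ : cplx E B = 0 := hU.mul_right_eq_zero.1 (hUt.mul_left_eq_zero.1 h0)
  have hQ' : ∀ i j, E i j = 0 ∧ B i j = 0 := fun i j => by
    have := congrFun (congrFun hQ i) j
    exact ⟨congrArg Complex.re this, congrArg Complex.im this⟩
  exact ⟨Matrix.ext fun i j => (hQ' i j).1, Matrix.ext fun i j => (hQ' i j).2⟩

lemma neg_symTF (e11 e12 e13 e22 e23 : ℝ) :
    -symTF e11 e12 e13 e22 e23 = symTF (-e11) (-e12) (-e13) (-e22) (-e23) := by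
  ext i j
  fin_cases i <;> fin_cases j <;> simp [symTF]
  ring

lemma density_nonneg (W : Fin 4 → Fin 4 → Fin 4 → Fin 4 → ℝ) (hW : IsWeylCandidate W)
    (u : Fin 4 → ℝ)
    (hu : (∑ a : Fin 4, ∑ b : Fin 4, eta a b * u a * u b) < 0 ∧ 0 < u 0) :
    0 ≤ (∑ a : Fin 4, ∑ b : Fin 4, ∑ c : Fin 4, ∑ d : Fin 4,
        belRobinson W a b c d * u a * u b * u c * u d) ∧
    ((∑ a : Fin 4, ∑ b : Fin 4, ∑ c : Fin 4, ∑ d : Fin 4,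
        belRobinson W a b c d * u a * u b * u c * u d) = 0 → W = 0) := by
  rw [density_eq]
  have hWeq := eq_weylOf W hW
  generalize W 0 1 0 1 = e11, W 0 1 0 2 = e12, W 0 1 0 3 = e13, W 0 2 0 2 = e22,
    W 0 2 0 3 = e23, W 0 1 2 3 = b11, -W 0 1 1 3 = b12, W 0 1 1 2 = b13, -W 0 2 1 3 = b22,
    W 0 2 1 2 = b23 at hWeq
  subst hWeq
  obtain ⟨hE, hE0⟩ := minkSq_bound e11 e12 e13 e22 e23 b11 b12 b13 b22 b23 u hu _ rfl
  obtain ⟨hB, hB0⟩ := minkSq_bound b11 b12 b13 b22 b23 (-e11) (-e12) (-e13) (-e22) (-e23)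
    u hu _ rfl
  have hsub := minkSq_sub e11 e12 e13 e22 e23 b11 b12 b13 b22 b23 u
  rw [weylSq_weylOf]
  rw [← neg_symTF] at hB hB0 hsub
  set E := symTF e11 e12 e13 e22 e23
  set B := symTF b11 b12 b13 b22 b23
  have hsum : 2 * (∑ p : Fin 4, ∑ m : Fin 4, eta p p * eta m m *
        electricPart (weylOf E B) u p m ^ 2)
      - (1/8) * (∑ a : Fin 4, ∑ b : Fin 4, eta a b * u a * u b) ^ 2 *
        (8 * ((∑ i, ∑ j, E i j ^ 2) - ∑ i, ∑ j, B i j ^ 2)) =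
      minkSq (electricPart (weylOf E B) u) + minkSq (electricPart (weylOf B (-E)) u) := by
    rw [← minkSq.eq_1 (electricPart (weylOf E B) u)]
    linear_combination hsub
  rw [hsum]
  refine ⟨add_nonneg hE hB, fun h => ?_⟩
  obtain ⟨hE1, hB1⟩ := (add_eq_zero_iff_of_nonneg hE hB).1 h
  obtain ⟨hEz, hBz⟩ := parts_eq_zero E B u hu (hE0 hE1) (hB0 hB1)
  funext a b c d
  simp [hEz, hBz, weylOf]

lemma belRobinson_zero (a b c d : Fin 4) : belRobinson 0 a b c d = 0 := by
  simp [belRobinson]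

/-- For a timelike future-directed vector `u`, the superenergy density of the
Bel–Robinson tensor of a Weyl candidate `W` with respect to `u` vanishes if and only
if `W = 0`; moreover it is non-negative, and strictly positive whenever `W ≠ 0`. -/
theorem stmt_12 (W : Fin 4 → Fin 4 → Fin 4 → Fin 4 → ℝ) (hW : IsWeylCandidate W)
    (u : Fin 4 → ℝ)
    (hu : (∑ a : Fin 4, ∑ b : Fin 4, eta a b * u a * u b) < 0 ∧ 0 < u 0) :
    ((∑ a : Fin 4, ∑ b : Fin 4, ∑ c : Fin 4, ∑ d : Fin 4,
        belRobinson W a b c d * u a * u b * u c * u d) = 0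
      ↔ ∀ a b c d, W a b c d = 0) ∧
    0 ≤ (∑ a : Fin 4, ∑ b : Fin 4, ∑ c : Fin 4, ∑ d : Fin 4,
        belRobinson W a b c d * u a * u b * u c * u d) ∧
    (W ≠ 0 → 0 < ∑ a : Fin 4, ∑ b : Fin 4, ∑ c : Fin 4, ∑ d : Fin 4,
        belRobinson W a b c d * u a * u b * u c * u d) := by
  obtain ⟨hnn, hz⟩ := density_nonneg W hW u hu
  refine ⟨⟨fun h a b c d => ?_, fun h => ?_⟩, hnn, fun hne => ?_⟩
  · rw [hz h]
    rfl
  · obtain rfl : W = 0 := by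
      funext a b c d
      exact h a b c d
    simp [belRobinson_zero]
  · exact lt_of_le_of_ne hnn fun h => hne (hz h.symm)
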